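/- (Theorem 4, relation for UUc) Let n ≥ 1 and g ≥ 0, and let U_g be the set of genus-g elements of the coset U = β·C_ρ in S_{2n}. Write N(T) for the number of equivalence classes of U_g under the equivalence relation generated by σ ≈ β²·σ·β⁻² together with σ ≈ t(σ) for each map t in the set T, where the possible maps are the reversal σ ↦ r·σ·r, the mirror σ ↦ σ·ρ, and the swap σ ↦ β⁻¹·ρ·σ⁻¹·β. Then: if n is even, N({reversal, mirror}) = N({mirror, swap}); and if n is odd, N({reversal, mirror}) = N({reversal, swap}). -/

import Mathlib

/-- The fixed-point-free involution of `Fin (2n)` pairing `2k` with `2k+1`. -/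
def rho (n : ℕ) : Equiv.Perm (Fin (2 * n)) :=
  Function.Involutive.toPerm
    (fun x => ⟨if x.val % 2 = 0 then x.val + 1 else x.val - 1, by
      have := x.isLt; split_ifs with h <;> omega⟩)
    (by
      intro x
      have hx := x.isLt
      apply Fin.ext
      dsimp only
      split_ifs <;> omega)

/-- The order-reversing involution `x ↦ 2n - 1 - x` of `Fin (2n)`. -/
def rev (n : ℕ) : Equiv.Perm (Fin (2 * n)) :=
  Function.Involutive.toPerm
    (fun x => ⟨2 * n - 1 - x.val, by have := x.isLt; omega⟩)
    (by
      intro x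
      have hx := x.isLt
      apply Fin.ext
      dsimp only
      omega)

/-- The number of cycles of a permutation of `Fin (2n)`, counting fixed points. -/
def numCycles (n : ℕ) (x : Equiv.Perm (Fin (2 * n))) : ℕ :=
  Multiset.card x.cycleType + (2 * n - x.support.card)

/-- The genus-`g` part of the coset `U = β·C_ρ`. -/
def Ugen (n g : ℕ) : Set (Equiv.Perm (Fin (2 * n))) :=
  {σ | (∃ ξ ∈ Subgroup.centralizer {rho n}, σ = finRotate (2 * n) * ξ) ∧
       numCycles n σ + numCycles n (σ * rho n) + 2 * g = n + 2}

/-- The number of equivalence classes of a set `s` of permutations under the smallest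
equivalence relation identifying `σ` with `f σ` for every `f` in `F`. -/
noncomputable def numClasses (n : ℕ) (s : Set (Equiv.Perm (Fin (2 * n))))
    (F : Set (Equiv.Perm (Fin (2 * n)) → Equiv.Perm (Fin (2 * n)))) : ℕ :=
  Nat.card (Quot (fun a b : s => ∃ f ∈ F, (b : Equiv.Perm (Fin (2 * n))) = f a))

/-- Conjugation by `β²`. -/
def conjB2 (n : ℕ) : Equiv.Perm (Fin (2 * n)) → Equiv.Perm (Fin (2 * n)) :=
  fun σ => finRotate (2 * n) ^ 2 * σ * (finRotate (2 * n) ^ 2)⁻¹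

/-- The swap map `σ ↦ β⁻¹·ρ·σ⁻¹·β`. -/
def swapMap (n : ℕ) : Equiv.Perm (Fin (2 * n)) → Equiv.Perm (Fin (2 * n)) :=
  fun σ => (finRotate (2 * n))⁻¹ * rho n * σ⁻¹ * finRotate (2 * n)

/-- The mirror map `σ ↦ σ·ρ`. -/
def mirrorMap (n : ℕ) : Equiv.Perm (Fin (2 * n)) → Equiv.Perm (Fin (2 * n)) :=
  fun σ => σ * rho n

/-- The reversal map `σ ↦ r·σ·r`. -/
def revMap (n : ℕ) : Equiv.Perm (Fin (2 * n)) → Equiv.Perm (Fin (2 * n)) :=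
  fun σ => rev n * σ * rev n

theorem card_quot_flip {X : Type*} (r r0 : X → X → Prop) (f : X → X) (e : X → ℤˣ)
    (hr : ∀ a b, r a b ↔ r0 a b ∨ b = f a)
    (h0 : ∀ a b, r0 a b → e a = e b) (hf : ∀ a, e (f a) = - e a)
    (hc : ∀ a b, r0 a b → Quot.mk r0 (f a) = Quot.mk r0 (f b))
    (hff : ∀ a, Quot.mk r0 (f (f a)) = Quot.mk r0 a) :
    Nat.card (Quot r) = Nat.card {q : Quot r0 // Quot.lift e h0 q = 1} := by
  have hne : ∀ a, e a ≠ 1 → e a = -1 := fun a h => (Int.units_eq_one_or _).resolve_left h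
  have key : ∀ a, Quot.lift e h0 (if e a = 1 then Quot.mk r0 a else Quot.mk r0 (f a)) = 1 := by
    intro a
    split_ifs with h
    · exact h
    · show e (f a) = 1
      rw [hf, hne a h]; rfl
  refine Nat.card_congr
    { toFun := Quot.lift (fun a => ⟨if e a = 1 then Quot.mk r0 a else Quot.mk r0 (f a), key a⟩) ?_
      invFun := fun q => Quot.lift (fun a => Quot.mk r a)
        (fun a b h => Quot.sound ((hr a b).2 (Or.inl h))) q.1
      left_inv := ?_
      right_inv := ?_ }
  · intro a b hab
    apply Subtype.ext
    dsimp only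
    rcases (hr a b).1 hab with h | h
    · rw [← h0 a b h]
      split_ifs
      · exact Quot.sound h
      · exact hc a b h
    · subst h
      rw [hf]
      by_cases h1 : e a = 1
      · rw [h1, if_pos rfl, if_neg (by decide), hff]
      · rw [hne a h1, if_neg (by decide), if_pos (by decide)]
  · intro q
    induction q using Quot.ind with
    | _ a =>
    dsimp only
    split_ifs with h
    · rfl
    · exact (Quot.sound ((hr a _).2 (Or.inr rfl))).symm
  · rintro ⟨q, hq⟩
    induction q using Quot.ind with
    | _ a =>
    apply Subtype.ext
    exact if_pos hq

section basic
variable (n : ℕ)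

theorem rho_val (x : Fin (2 * n)) :
    (rho n x).val = if x.val % 2 = 0 then x.val + 1 else x.val - 1 := rfl

theorem rev_val (x : Fin (2 * n)) : (rev n x).val = 2 * n - 1 - x.val := rfl

theorem rot_val (m : ℕ) (x : Fin m) :
    (finRotate m x).val = if x.val + 1 = m then 0 else x.val + 1 := by
  cases m with
  | zero => exact x.elim0
  | succ m =>
    rcases eq_or_ne x (Fin.last m) with h | h
    · subst h; simp
    · have : x.val ≠ m := fun h' => h (Fin.ext h')
      rw [coe_finRotate_of_ne_last h, if_neg (by omega)]

theorem rho_sq : rho n * rho n = 1 := by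
  ext x; simp only [Equiv.Perm.mul_apply, rho_val, Equiv.Perm.one_apply]; split_ifs <;> omega

theorem rev_sq : rev n * rev n = 1 := by
  ext x; simp only [Equiv.Perm.mul_apply, rev_val, Equiv.Perm.one_apply]; omega

theorem rev_rho : rev n * rho n = rho n * rev n := by
  ext x
  have := x.isLt
  have h2 : (2 * n - 1 - x.val) % 2 = 0 ↔ x.val % 2 ≠ 0 := by omega
  simp only [Equiv.Perm.mul_apply, rev_val, rho_val, h2]
  split_ifs <;> first | contradiction | omega

theorem rot2_rho : finRotate (2 * n) * finRotate (2 * n) * rho n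
    = rho n * (finRotate (2 * n) * finRotate (2 * n)) := by
  ext x
  have := x.isLt
  simp only [Equiv.Perm.mul_apply, rot_val, rho_val]; split_ifs <;> omega

theorem rot_rev_rot : finRotate (2 * n) * rev n * finRotate (2 * n) = rev n := by
  ext x
  have := x.isLt
  simp only [Equiv.Perm.mul_apply, rot_val, rev_val]; split_ifs <;> omega

theorem sign_rho (hn : Odd n) : Equiv.Perm.sign (rho n) = -1 := by
  have h := Equiv.Perm.sign_of_pow_two_eq_one (σ := rho n) (by rw [pow_two, rho_sq])
  have hs : (rho n).support = Finset.univ := by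
    ext x
    simp only [Equiv.Perm.mem_support, Finset.mem_univ, iff_true]
    intro hx
    have := congrArg Fin.val hx
    rw [rho_val] at this
    split_ifs at this <;> omega
  have hc : Fintype.card (Function.fixedPoints (rho n)) = 0 := by
    rw [Fintype.card_eq_zero_iff]
    refine ⟨fun x => ?_⟩
    have hx : x.1 ∈ (rho n).support := hs ▸ Finset.mem_univ _
    exact (Equiv.Perm.mem_support.1 hx) x.2
  rw [h, hc, Fintype.card_fin, Nat.sub_zero, Nat.mul_div_cancel_left _ (by norm_num)]
  exact hn.neg_one_pow
end basic

theorem numCycles_conj (n : ℕ) (x y : Equiv.Perm (Fin (2 * n))) :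
    numCycles n (y * x * y⁻¹) = numCycles n x := by
  simp [numCycles, Equiv.Perm.cycleType_conj]

theorem numCycles_inv (n : ℕ) (x : Equiv.Perm (Fin (2 * n))) :
    numCycles n x⁻¹ = numCycles n x := by
  simp [numCycles, Equiv.Perm.cycleType_inv]

theorem half_eq (n : ℕ) (ξ : Equiv.Perm (Fin (2 * n))) (h : ξ * rho n = rho n * ξ)
    (x y : Fin (2 * n)) (hxy : x.val / 2 = y.val / 2) : (ξ x).val / 2 = (ξ y).val / 2 := by
  by_cases he : x = y
  · rw [he]
  · have he' : x.val ≠ y.val := fun h' => he (Fin.ext h')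
    have hy : y = rho n x := by
      apply Fin.ext; rw [rho_val]; split_ifs <;> omega
    have : ξ y = rho n (ξ x) := by
      rw [hy]; exact congrArg (fun p => p x) h
    rw [this, rho_val]; split_ifs <;> omega

/-- The lift `k ↦ 2k`. -/
def dbl (n : ℕ) (k : Fin n) : Fin (2 * n) := ⟨2 * k.val, by omega⟩

/-- The projection `x ↦ x / 2`. -/
def hlf (n : ℕ) (x : Fin (2 * n)) : Fin n := ⟨x.val / 2, by omega⟩

theorem hlf_dbl (n : ℕ) (k : Fin n) : hlf n (dbl n k) = k := by
  apply Fin.ext; simp [hlf, dbl]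

theorem mem_cent (n : ℕ) (ξ : Equiv.Perm (Fin (2 * n))) :
    ξ ∈ Subgroup.centralizer {rho n} ↔ ξ * rho n = rho n * ξ := by
  rw [Subgroup.mem_centralizer_singleton_iff]

theorem hlf_comp (n : ℕ) (ξ : Equiv.Perm (Fin (2 * n))) (h : ξ ∈ Subgroup.centralizer {rho n})
    (x : Fin (2 * n)) : hlf n (ξ (dbl n (hlf n x))) = hlf n (ξ x) := by
  apply Fin.ext
  apply half_eq n ξ ((mem_cent n ξ).1 h)
  simp [dbl, hlf]

/-- The induced action on pairs. -/
def barHom (n : ℕ) : Subgroup.centralizer {rho n} →* Equiv.Perm (Fin n) where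
  toFun ξ :=
    { toFun := fun k => hlf n (ξ.1 (dbl n k))
      invFun := fun k => hlf n (ξ.1⁻¹ (dbl n k))
      left_inv := fun k => by
        dsimp only
        rw [hlf_comp n _ (inv_mem ξ.2), ← Equiv.Perm.mul_apply, inv_mul_cancel, Equiv.Perm.one_apply, hlf_dbl]
      right_inv := fun k => by
        dsimp only
        rw [hlf_comp n _ ξ.2, ← Equiv.Perm.mul_apply, mul_inv_cancel, Equiv.Perm.one_apply, hlf_dbl] }
  map_one' := by ext k; simp [hlf_dbl]
  map_mul' a b := by
    ext k
    show (hlf n (a.1 (b.1 (dbl n k)))).val = (hlf n (a.1 (dbl n (hlf n (b.1 (dbl n k)))))).val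
    rw [hlf_comp n _ a.2]

theorem exists_chi (n : ℕ) (hn : 1 ≤ n) (he : Even n) :
    ∃ χ : Subgroup.centralizer {rho n} →* ℤˣ,
      (∀ x, x.1 = rho n → χ x = 1) ∧
      (∀ x, x.1 = finRotate (2 * n) * finRotate (2 * n) → χ x = -1) := by
  refine ⟨Equiv.Perm.sign.comp (barHom n), ?_, ?_⟩
  · intro x hx
    have : barHom n x = 1 := by
      ext k
      show (hlf n (x.1 (dbl n k))).val = k.val
      simp only [hx, hlf, dbl, rho_val]
      split_ifs <;> omega
    simp [this]
  · intro x hx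
    have : barHom n x = finRotate n := by
      ext k
      show (hlf n (x.1 (dbl n k))).val = _
      have := k.isLt
      simp only [hx, hlf, dbl, rot_val, Equiv.Perm.mul_apply]
      split_ifs <;> omega
    rw [MonoidHom.comp_apply, this]
    obtain ⟨m, rfl⟩ : ∃ m, n = m + 1 := ⟨n - 1, by omega⟩
    rw [sign_finRotate]
    exact Odd.neg_one_pow (by rcases he with ⟨a, ha⟩; exact ⟨a - 1, by omega⟩)

section grp
variable {G : Type*} [Group G] (b p r s : G)

/-- The basic relations between `β`, `ρ`, `r`. -/
structure Rels : Prop where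
  pp : p * p = 1
  rr : r * r = 1
  rp : r * p = p * r
  bp : b * b * p = p * (b * b)
  br : b * r * b = r

variable {b p r s}
theorem Rels.nf (h : Rels b p r) :
    p⁻¹ = p ∧ r⁻¹ = r ∧ (∀ x, p * (p * x) = x) ∧ (∀ x, r * (r * x) = x) ∧
    (r * p = p * r) ∧ (∀ x, r * (p * x) = p * (r * x)) ∧
    (r * b = b⁻¹ * r) ∧ (∀ x, r * (b * x) = b⁻¹ * (r * x)) ∧
    (r * b⁻¹ = b * r) ∧ (∀ x, r * (b⁻¹ * x) = b * (r * x)) ∧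
    (p * b = b * (b * (p * b⁻¹))) ∧ (∀ x, p * (b * x) = b * (b * (p * (b⁻¹ * x)))) ∧
    (p * (b⁻¹ * b⁻¹) = b⁻¹ * (b⁻¹ * p)) ∧
    (∀ x, p * (b⁻¹ * (b⁻¹ * x)) = b⁻¹ * (b⁻¹ * (p * x))) := by
  obtain ⟨pp, rr, rp, bp, br⟩ := h
  have a1 : p⁻¹ = p := inv_eq_of_mul_eq_one_left pp
  have a2 : r⁻¹ = r := inv_eq_of_mul_eq_one_left rr
  have a3 : r * b = b⁻¹ * r := by rw [eq_inv_mul_iff_mul_eq, ← mul_assoc, br]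
  have a4 : r * b⁻¹ = b * r := by rw [mul_inv_eq_iff_eq_mul, br]
  have a5 : p * b = b * (b * (p * b⁻¹)) := by
    rw [← mul_assoc, ← mul_assoc, bp]; group
  have a6 : p * (b⁻¹ * b⁻¹) = b⁻¹ * (b⁻¹ * p) := by
    have : (b * b) * (p * (b⁻¹ * b⁻¹)) = (b * b) * (b⁻¹ * (b⁻¹ * p)) := by
      rw [← mul_assoc, bp]; group
    exact mul_left_cancel this
  refine ⟨a1, a2, fun x => ?_, fun x => ?_, rp, fun x => ?_, a3, fun x => ?_, a4, fun x => ?_,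
    a5, fun x => ?_, a6, fun x => ?_⟩
  · rw [← mul_assoc, pp, one_mul]
  · rw [← mul_assoc, rr, one_mul]
  · rw [← mul_assoc, rp, mul_assoc]
  · rw [← mul_assoc, a3, mul_assoc]
  · rw [← mul_assoc, a4, mul_assoc]
  · rw [← mul_assoc, a5]; simp only [mul_assoc]
  · rw [← mul_assoc b⁻¹ b⁻¹, ← mul_assoc, a6]; simp only [mul_assoc]

theorem Rels.all (h : Rels b p r) (hs : s * p = b * p * b⁻¹ * s) :
    -- membership
    ((b ^ 2 * s * (b ^ 2)⁻¹) * p = b * p * b⁻¹ * (b ^ 2 * s * (b ^ 2)⁻¹)) ∧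
    ((r * s * r) * p = b * p * b⁻¹ * (r * s * r)) ∧
    ((s * p) * p = b * p * b⁻¹ * (s * p)) ∧
    ((b⁻¹ * p * s⁻¹ * b) * p = b * p * b⁻¹ * (b⁻¹ * p * s⁻¹ * b)) ∧
    -- S T = T S
    (b⁻¹ * p * (b ^ 2 * s * (b ^ 2)⁻¹)⁻¹ * b = b ^ 2 * (b⁻¹ * p * s⁻¹ * b) * (b ^ 2)⁻¹) ∧
    -- S M, M S
    (b⁻¹ * p * (s * p)⁻¹ * b = b⁻¹ * s⁻¹ * b) ∧
    ((b⁻¹ * p * s⁻¹ * b) * p = b⁻¹ * s⁻¹ * b) ∧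
    -- S R = R T S
    (b⁻¹ * p * (r * s * r)⁻¹ * b = r * (b ^ 2 * (b⁻¹ * p * s⁻¹ * b) * (b ^ 2)⁻¹) * r) ∧
    -- R M = M R
    (r * (s * p) * r = r * s * r * p) ∧
    -- M T = T M
    (b ^ 2 * s * (b ^ 2)⁻¹ * p = b ^ 2 * (s * p) * (b ^ 2)⁻¹) ∧
    -- T R T = R
    (b ^ 2 * (r * (b ^ 2 * s * (b ^ 2)⁻¹) * r) * (b ^ 2)⁻¹ = r * s * r) ∧
    -- R R, M M, T S S
    (r * (r * s * r) * r = s) ∧ (s * p * p = s) ∧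
    (b ^ 2 * (b⁻¹ * p * (b⁻¹ * p * s⁻¹ * b)⁻¹ * b) * (b ^ 2)⁻¹ = s) := by
  obtain ⟨e1, e2, e3, e4, e5, e6, e7, e8, e9, e10, e11, e12, e13, e14⟩ := h.nf
  have pp := h.pp
  have rr := h.rr
  have s1 : s * p = b * (p * (b⁻¹ * s)) := by rw [hs]; simp only [mul_assoc]
  have s2 : ∀ x, s * (p * x) = b * (p * (b⁻¹ * (s * x))) := fun x => by
    rw [← mul_assoc, hs]; simp only [mul_assoc]
  have t0 : s⁻¹ * (b * p * b⁻¹) = p * s⁻¹ := by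
    rw [inv_mul_eq_iff_eq_mul, ← mul_assoc, hs]; group
  have t1 : s⁻¹ * (b * (p * b⁻¹)) = p * s⁻¹ := by rw [← t0]; simp only [mul_assoc]
  have t2 : ∀ x, s⁻¹ * (b * (p * (b⁻¹ * x))) = p * (s⁻¹ * x) := fun x => by
    rw [← mul_assoc p s⁻¹ x, ← t1]; simp only [mul_assoc]
  have t3 : s⁻¹ * (b * p) = p * (s⁻¹ * b) := by
    have := t2 b; simpa using this
  have t4 : ∀ x, s⁻¹ * (b * (p * x)) = p * (s⁻¹ * (b * x)) := fun x => by
    have := t2 (b * x); simpa using this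
  have s3 : s * (b⁻¹ * (b⁻¹ * p)) = b * (p * (b⁻¹ * (s * (b⁻¹ * b⁻¹)))) := by
    rw [← e13, s2]
  refine ⟨?_, ?_, ?_, ?_, ?_, ?_, ?_, ?_, ?_, ?_, ?_, ?_, ?_, ?_⟩ <;>
    simp [pow_two, mul_assoc, e1, e2, e3, e4, e5, e6, e7, e8, e9, e10, e12,
      e14, s1, s2, s3, t3, rr]
end grp

theorem rels (n : ℕ) : Rels (finRotate (2 * n)) (rho n) (rev n) :=
  ⟨rho_sq n, rev_sq n, rev_rho n, rot2_rho n, rot_rev_rot n⟩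

theorem mem_coset_iff (n : ℕ) (σ : Equiv.Perm (Fin (2 * n))) :
    (∃ ξ ∈ Subgroup.centralizer {rho n}, σ = finRotate (2 * n) * ξ) ↔
      σ * rho n = finRotate (2 * n) * rho n * (finRotate (2 * n))⁻¹ * σ := by
  constructor
  · rintro ⟨ξ, hξ, rfl⟩
    rw [mul_assoc, (mem_cent n ξ).1 hξ]; group
  · intro h
    refine ⟨(finRotate (2 * n))⁻¹ * σ, ?_, by group⟩
    rw [mem_cent, mul_assoc, h]; group

theorem Ugen_iff (n g : ℕ) (σ : Equiv.Perm (Fin (2 * n))) :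
    σ ∈ Ugen n g ↔ σ * rho n = finRotate (2 * n) * rho n * (finRotate (2 * n))⁻¹ * σ ∧
       numCycles n σ + numCycles n (σ * rho n) + 2 * g = n + 2 := by
  rw [← mem_coset_iff]; rfl

theorem conj_mem (n g : ℕ) (σ : Equiv.Perm (Fin (2 * n))) (h : σ ∈ Ugen n g) :
    conjB2 n σ ∈ Ugen n g := by
  rw [Ugen_iff] at h ⊢
  obtain ⟨a1, a2, a3, a4, a5, a6, a7, a8, a9, a10, a11, a12, a13, a14⟩ := (rels n).all h.1
  refine ⟨a1, ?_⟩
  unfold conjB2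
  rw [a10, numCycles_conj, numCycles_conj]
  exact h.2

theorem rev_mem (n g : ℕ) (σ : Equiv.Perm (Fin (2 * n))) (h : σ ∈ Ugen n g) :
    revMap n σ ∈ Ugen n g := by
  rw [Ugen_iff] at h ⊢
  obtain ⟨a1, a2, a3, a4, a5, a6, a7, a8, a9, a10, a11, a12, a13, a14⟩ := (rels n).all h.1
  refine ⟨a2, ?_⟩
  have hr : ∀ x, rev n * x * rev n = rev n * x * (rev n)⁻¹ := fun x => by
    rw [(rels n).nf.2.1]
  unfold revMap
  rw [← a9, hr, hr, numCycles_conj, numCycles_conj]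
  exact h.2

theorem mirror_mem (n g : ℕ) (σ : Equiv.Perm (Fin (2 * n))) (h : σ ∈ Ugen n g) :
    mirrorMap n σ ∈ Ugen n g := by
  rw [Ugen_iff] at h ⊢
  obtain ⟨a1, a2, a3, a4, a5, a6, a7, a8, a9, a10, a11, a12, a13, a14⟩ := (rels n).all h.1
  refine ⟨a3, ?_⟩
  unfold mirrorMap
  rw [a13]
  omega

theorem swap_mem (n g : ℕ) (σ : Equiv.Perm (Fin (2 * n))) (h : σ ∈ Ugen n g) :
    swapMap n σ ∈ Ugen n g := by
  rw [Ugen_iff] at h ⊢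
  obtain ⟨a1, a2, a3, a4, a5, a6, a7, a8, a9, a10, a11, a12, a13, a14⟩ := (rels n).all h.1
  refine ⟨a4, ?_⟩
  have e1 : swapMap n σ = (finRotate (2 * n))⁻¹ * (σ * rho n)⁻¹ * ((finRotate (2 * n))⁻¹)⁻¹ := by
    unfold swapMap
    rw [mul_inv_rev, (rels n).nf.1, inv_inv]; simp only [mul_assoc]
  have e2 : swapMap n σ * rho n = (finRotate (2 * n))⁻¹ * σ⁻¹ * ((finRotate (2 * n))⁻¹)⁻¹ := by
    rw [inv_inv]; exact a7
  rw [e2, e1, numCycles_conj, numCycles_conj, numCycles_inv, numCycles_inv]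
  omega

/-- The generating relation on a subset. -/
def genRel (n : ℕ) (s : Set (Equiv.Perm (Fin (2 * n))))
    (F : Set (Equiv.Perm (Fin (2 * n)) → Equiv.Perm (Fin (2 * n)))) : s → s → Prop :=
  fun a b => ∃ f ∈ F, (b : Equiv.Perm (Fin (2 * n))) = f a

/-- `f` flips `E`, and descends to an involution on classes for `F`. -/
structure Flips (n : ℕ) (s : Set (Equiv.Perm (Fin (2 * n))))
    (F : Set (Equiv.Perm (Fin (2 * n)) → Equiv.Perm (Fin (2 * n))))
    (E : Equiv.Perm (Fin (2 * n)) → ℤˣ)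
    (f : Equiv.Perm (Fin (2 * n)) → Equiv.Perm (Fin (2 * n))) : Prop where
  mem : ∀ σ ∈ s, f σ ∈ s
  flip : ∀ σ ∈ s, E (f σ) = - E σ
  comm : ∀ t ∈ F, ∀ σ ∈ s, ∀ h1 : f (t σ) ∈ s, ∀ h2 : f σ ∈ s,
    Quot.mk (genRel n s F) ⟨_, h1⟩ = Quot.mk (genRel n s F) ⟨_, h2⟩
  invol : ∀ σ, ∀ h : σ ∈ s, ∀ h2 : f (f σ) ∈ s,
    Quot.mk (genRel n s F) ⟨_, h2⟩ = Quot.mk (genRel n s F) ⟨_, h⟩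

theorem numClasses_eq (n : ℕ) (s : Set (Equiv.Perm (Fin (2 * n))))
    (F A B : Set (Equiv.Perm (Fin (2 * n)) → Equiv.Perm (Fin (2 * n))))
    (E : Equiv.Perm (Fin (2 * n)) → ℤˣ)
    (f f' : Equiv.Perm (Fin (2 * n)) → Equiv.Perm (Fin (2 * n)))
    (hE : ∀ t ∈ F, ∀ σ ∈ s, E (t σ) = E σ)
    (hA : ∀ t, t ∈ A ↔ t ∈ F ∨ t = f) (hB : ∀ t, t ∈ B ↔ t ∈ F ∨ t = f')
    (hf : Flips n s F E f) (hf' : Flips n s F E f') :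
    numClasses n s A = numClasses n s B := by
  have h0 : ∀ a b : s, genRel n s F a b → E a.1 = E b.1 := by
    rintro a b ⟨t, ht, hb⟩
    rw [hb, hE t ht a.1 a.2]
  have main : ∀ (A : Set (Equiv.Perm (Fin (2 * n)) → Equiv.Perm (Fin (2 * n)))) f,
      (∀ t, t ∈ A ↔ t ∈ F ∨ t = f) → Flips n s F E f →
      numClasses n s A = Nat.card {q : Quot (genRel n s F) //
        Quot.lift (fun a : s => E a.1) h0 q = 1} := by
    intro A f hA hf
    refine card_quot_flip _ (genRel n s F) (fun a => ⟨f a.1, hf.mem _ a.2⟩) (fun a => E a.1)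
      ?_ h0 ?_ ?_ ?_
    · intro a b
      constructor
      · rintro ⟨t, ht, hb⟩
        rcases (hA t).1 ht with h | h
        · exact Or.inl ⟨t, h, hb⟩
        · right; apply Subtype.ext; rw [hb, h]
      · rintro (⟨t, ht, hb⟩ | h)
        · exact ⟨t, (hA t).2 (Or.inl ht), hb⟩
        · exact ⟨f, (hA f).2 (Or.inr rfl), congrArg Subtype.val h⟩
    · intro a; exact hf.flip _ a.2
    · rintro ⟨a, ha⟩ ⟨b, hb⟩ ⟨t, ht, h⟩
      dsimp only at h
      subst h
      exact (hf.comm t ht a ha _ _).symm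
    · intro a; exact hf.invol _ a.2 _
  rw [main A f hA hf, main B f' hB hf']

theorem step_eq {n : ℕ} {s : Set (Equiv.Perm (Fin (2 * n)))}
    {F : Set (Equiv.Perm (Fin (2 * n)) → Equiv.Perm (Fin (2 * n)))}
    (t : Equiv.Perm (Fin (2 * n)) → Equiv.Perm (Fin (2 * n))) (ht : t ∈ F)
    {x y : Equiv.Perm (Fin (2 * n))} (hx : x ∈ s) (hy : y ∈ s) (h : y = t x) :
    Quot.mk (genRel n s F) ⟨x, hx⟩ = Quot.mk (genRel n s F) ⟨y, hy⟩ :=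
  Quot.sound ⟨t, ht, h⟩

theorem mk_eq {n : ℕ} {s : Set (Equiv.Perm (Fin (2 * n)))}
    {F : Set (Equiv.Perm (Fin (2 * n)) → Equiv.Perm (Fin (2 * n)))}
    {x y : Equiv.Perm (Fin (2 * n))} (hx : x ∈ s) (hy : y ∈ s) (h : x = y) :
    Quot.mk (genRel n s F) ⟨x, hx⟩ = Quot.mk (genRel n s F) ⟨y, hy⟩ := by
  subst h; rfl

theorem odd_case (n g : ℕ) (hn : Odd n) :
    numClasses n (Ugen n g) {conjB2 n, revMap n, mirrorMap n}
        = numClasses n (Ugen n g) {conjB2 n, revMap n, swapMap n} := by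
  have hρ := sign_rho n hn
  have T : conjB2 n ∈ ({conjB2 n, revMap n} : Set _) := Or.inl rfl
  have R : revMap n ∈ ({conjB2 n, revMap n} : Set _) := Or.inr rfl
  have hr2 : Equiv.Perm.sign (rev n) * Equiv.Perm.sign (rev n) = 1 := by
    rw [← map_mul, rev_sq, map_one]
  apply numClasses_eq n (Ugen n g) {conjB2 n, revMap n} _ _ (fun σ => Equiv.Perm.sign σ)
    (mirrorMap n) (swapMap n)
  · rintro t (rfl | rfl) σ hσ
    · simp [conjB2, mul_comm]
    · simp only [revMap, map_mul]
      rw [mul_comm, ← mul_assoc, hr2, one_mul]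
  · intro t; simp [or_assoc]
  · intro t; simp [or_assoc]
  · refine ⟨mirror_mem n g, ?_, ?_, ?_⟩
    · intro σ hσ; simp [mirrorMap, hρ]
    · intro t ht σ hσ h1 h2
      obtain ⟨a1, a2, a3, a4, a5, a6, a7, a8, a9, a10, a11, a12, a13, a14⟩ :=
        (rels n).all ((Ugen_iff n g σ).1 hσ).1
      rcases ht with rfl | rfl
      · exact (step_eq _ T h2 h1 a10).symm
      · exact (step_eq _ R h2 h1 a9.symm).symm
    · intro σ h h2
      obtain ⟨a1, a2, a3, a4, a5, a6, a7, a8, a9, a10, a11, a12, a13, a14⟩ :=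
        (rels n).all ((Ugen_iff n g σ).1 h).1
      exact mk_eq h2 h a13
  · refine ⟨swap_mem n g, ?_, ?_, ?_⟩
    · intro σ hσ
      simp only [swapMap, map_mul, hρ, Equiv.Perm.sign_inv]
      rw [mul_comm, ← mul_assoc, ← mul_assoc, Int.units_mul_self]; simp
    · intro t ht σ hσ h1 h2
      obtain ⟨a1, a2, a3, a4, a5, a6, a7, a8, a9, a10, a11, a12, a13, a14⟩ :=
        (rels n).all ((Ugen_iff n g σ).1 hσ).1
      rcases ht with rfl | rfl
      · exact (step_eq _ T h2 h1 a5).symm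
      · have h3 := conj_mem n g _ h2
        exact ((step_eq _ T h2 h3 rfl).trans (step_eq _ R h3 h1 a8)).symm
    · intro σ h h2
      obtain ⟨a1, a2, a3, a4, a5, a6, a7, a8, a9, a10, a11, a12, a13, a14⟩ :=
        (rels n).all ((Ugen_iff n g σ).1 h).1
      exact step_eq _ T h2 h a14.symm

theorem exists_E (n : ℕ) (hn : 1 ≤ n) (he : Even n) :
    ∃ E : Equiv.Perm (Fin (2 * n)) → ℤˣ, ∀ σ,
      σ * rho n = finRotate (2 * n) * rho n * (finRotate (2 * n))⁻¹ * σ →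
      E (conjB2 n σ) = E σ ∧ E (mirrorMap n σ) = E σ ∧ E (revMap n σ) = - E σ ∧
      E (swapMap n σ) = - E σ := by
  classical
  obtain ⟨χ, h1, h2⟩ := exists_chi n hn he
  obtain ⟨e1, e2, e3, e4, e5, e6, e7, e8, e9, e10, e11, e12, e13, e14⟩ := (rels n).nf
  let P : Subgroup.centralizer {rho n} := ⟨rho n, (mem_cent n _).2 rfl⟩
  let R : Subgroup.centralizer {rho n} := ⟨rev n, (mem_cent n _).2 (rev_rho n)⟩
  let W : Subgroup.centralizer {rho n} :=
    ⟨finRotate (2 * n) * finRotate (2 * n), (mem_cent n _).2 (rot2_rho n)⟩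
  have hP : χ P = 1 := h1 _ rfl
  have hW : χ W = -1 := h2 _ rfl
  let E : Equiv.Perm (Fin (2 * n)) → ℤˣ := fun σ =>
    if h : (finRotate (2 * n))⁻¹ * σ ∈ Subgroup.centralizer {rho n} then χ ⟨_, h⟩ else 1
  have hE : ∀ σ (y : Subgroup.centralizer {rho n}), (finRotate (2 * n))⁻¹ * σ = y.1 →
      E σ = χ y := by
    intro σ y hy
    have : (finRotate (2 * n))⁻¹ * σ ∈ Subgroup.centralizer {rho n} := hy ▸ y.2
    simp only [E, dif_pos this]
    congr 1
    exact Subtype.ext hy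
  refine ⟨E, fun σ hσ => ?_⟩
  obtain ⟨ξ, hξ, rfl⟩ := (mem_coset_iff n σ).2 hσ
  let X : Subgroup.centralizer {rho n} := ⟨ξ, hξ⟩
  rw [hE (finRotate (2 * n) * ξ) X (inv_mul_cancel_left _ _)]
  refine ⟨?_, ?_, ?_, ?_⟩
  · rw [hE _ (W * X * W⁻¹)]
    · rw [map_mul, map_mul, map_inv, hW]; simp
    · simp [conjB2, W, X, pow_two, mul_assoc]
  · rw [hE _ (X * P)]
    · rw [map_mul, hP, mul_one]
    · simp [mirrorMap, X, P, mul_assoc]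
  · rw [hE _ (R * W * X * R)]
    · rw [map_mul, map_mul, map_mul, hW, mul_comm, ← mul_assoc, ← mul_assoc, Int.units_mul_self]
      simp
    · simp [revMap, R, W, X, mul_assoc, e8]
  · rw [hE _ (W⁻¹ * P * X⁻¹)]
    · rw [map_mul, map_mul, map_inv, map_inv, hW, hP]
      simp
    · simp [swapMap, P, W, X, mul_assoc]

theorem even_case (n g : ℕ) (hn : 1 ≤ n) (he : Even n) :
    numClasses n (Ugen n g) {conjB2 n, revMap n, mirrorMap n}
        = numClasses n (Ugen n g) {conjB2 n, mirrorMap n, swapMap n} := by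
  obtain ⟨E, hE⟩ := exists_E n hn he
  have T : conjB2 n ∈ ({conjB2 n, mirrorMap n} : Set _) := Or.inl rfl
  have M : mirrorMap n ∈ ({conjB2 n, mirrorMap n} : Set _) := Or.inr rfl
  have hU : ∀ σ ∈ Ugen n g, _ := fun σ hσ => hE σ ((Ugen_iff n g σ).1 hσ).1
  apply numClasses_eq n (Ugen n g) {conjB2 n, mirrorMap n} _ _ E (revMap n) (swapMap n)
  · rintro t (rfl | rfl) σ hσ
    · exact (hU σ hσ).1
    · exact (hU σ hσ).2.1
  · intro t; simp only [Set.mem_insert_iff, Set.mem_singleton_iff]; tauto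
  · intro t; simp [or_assoc]
  · refine ⟨rev_mem n g, fun σ hσ => (hU σ hσ).2.2.1, ?_, ?_⟩
    · intro t ht σ hσ h1 h2
      obtain ⟨a1, a2, a3, a4, a5, a6, a7, a8, a9, a10, a11, a12, a13, a14⟩ :=
        (rels n).all ((Ugen_iff n g σ).1 hσ).1
      rcases ht with rfl | rfl
      · exact step_eq _ T h1 h2 a11.symm
      · exact (step_eq _ M h2 h1 a9).symm
    · intro σ h h2
      obtain ⟨a1, a2, a3, a4, a5, a6, a7, a8, a9, a10, a11, a12, a13, a14⟩ :=
        (rels n).all ((Ugen_iff n g σ).1 h).1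
      exact mk_eq h2 h a12
  · refine ⟨swap_mem n g, fun σ hσ => (hU σ hσ).2.2.2, ?_, ?_⟩
    · intro t ht σ hσ h1 h2
      obtain ⟨a1, a2, a3, a4, a5, a6, a7, a8, a9, a10, a11, a12, a13, a14⟩ :=
        (rels n).all ((Ugen_iff n g σ).1 hσ).1
      rcases ht with rfl | rfl
      · exact (step_eq _ T h2 h1 a5).symm
      · exact (step_eq _ M h2 h1 (a6.trans a7.symm)).symm
    · intro σ h h2
      obtain ⟨a1, a2, a3, a4, a5, a6, a7, a8, a9, a10, a11, a12, a13, a14⟩ :=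
        (rels n).all ((Ugen_iff n g σ).1 h).1
      exact step_eq _ T h2 h a14.symm

/-- Theorem 4, relation for UUc: `|UUc| = |OUb|` for n even and `|UUc| = |UOb|`
for n odd. -/
theorem UUc_relations (n : ℕ) (hn : 1 ≤ n) (g : ℕ) :
    (Even n →
      numClasses n (Ugen n g) {conjB2 n, revMap n, mirrorMap n}
        = numClasses n (Ugen n g) {conjB2 n, mirrorMap n, swapMap n}) ∧
    (Odd n →
      numClasses n (Ugen n g) {conjB2 n, revMap n, mirrorMap n}
        = numClasses n (Ugen n g) {conjB2 n, revMap n, swapMap n}) := by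
  exact ⟨even_case n g hn, odd_case n g⟩
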